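/- Let r, p, q, k ∈ ℕ with r ≥ 2, p ≥ 1, and r·q ≤ p − 1. Set 𝓢 = 𝒮^r_{p−1,q} × 𝒮^r_{p,q} ⊆ V and (p₁, p₂) = (p−1, p). Let 𝐓 be a matrix differential operator whose components satisfy T_{ab} = Σ_{i+rj ≤ p_b, j ≤ q} M_{f^{ab}_{ij}} ∘ D_x^i ∘ D_y^j with all f^{ab}_{ij} = 0 for i + j > k, each component T_{ab} having nonpositive y-degree, and suppose 𝐓 preserves 𝓢. Then there exists 𝐏 in the ℂ-linear span of all compositions of at most k+1 elements of G = {T¹, …, T^{5+r}, J, Q⁻₀, Q⁻₁, Q⁺₀, Q⁺₁} ∪ {Q⁺_{2+α} : 0 ≤ α ≤ r−1} (the empty composition being the identity of V) such that 𝐓(w) = 𝐏(w) for all w ∈ 𝓢; moreover, if k ≤ q then 𝐓 = 𝐏 as endomorphisms of V. -/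

import Mathlib

noncomputable section

open MvPolynomial

/-- The bivariate polynomial ring `R = ℂ[x,y]`. -/
abbrev R2 : Type := MvPolynomial (Fin 2) ℂ

/-- The variable `x`. -/
def Xv : R2 := X 0

/-- The variable `y`. -/
def Yv : R2 := X 1

/-- The partial derivative `∂_x` as a `ℂ`-linear endomorphism. -/
def Dx : Module.End ℂ R2 := (pderiv (0 : Fin 2)).toLinearMap

/-- The partial derivative `∂_y` as a `ℂ`-linear endomorphism. -/
def Dy : Module.End ℂ R2 := (pderiv (1 : Fin 2)).toLinearMap

/-- Multiplication by `f` as an endomorphism. -/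
def Mf (f : R2) : Module.End ℂ R2 := LinearMap.mulLeft ℂ f

/-- All compositions (products) of at most `k` elements of `S`; the empty
composition is the identity. -/
def prodsLE (k : ℕ) (S : Set (Module.End ℂ R2)) : Set (Module.End ℂ R2) :=
  {T | ∃ l : List (Module.End ℂ R2), l.length ≤ k ∧ (∀ a ∈ l, a ∈ S) ∧ l.prod = T}

/-- The rectangular module `ℛ_{n,m}`. -/
def Rmod (n m : ℕ) : Submodule ℂ R2 :=
  Submodule.span ℂ {P : R2 | ∃ i j : ℕ, i ≤ n ∧ j ≤ m ∧ P = Xv ^ i * Yv ^ j}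

/-- The triangular module `𝒯ₙ`. -/
def Tmod (n : ℕ) : Submodule ℂ R2 :=
  Submodule.span ℂ {P : R2 | ∃ i j : ℕ, i + j ≤ n ∧ P = Xv ^ i * Yv ^ j}

/-- The staircase module `𝒮^r_{p,q}`. -/
def Smod (r p q : ℕ) : Submodule ℂ R2 :=
  Submodule.span ℂ {P : R2 | ∃ i j : ℕ, i + r * j ≤ p ∧ j ≤ q ∧ P = Xv ^ i * Yv ^ j}

/-- An endomorphism has nonpositive `y`-degree if it maps each monomial `xᵃyᵇ`
into the span of the monomials `x^c y^e` with `e ≤ b`. -/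
def NonposY (T : Module.End ℂ R2) : Prop :=
  ∀ a b : ℕ, T (Xv ^ a * Yv ^ b) ∈
    Submodule.span ℂ {P : R2 | ∃ c e : ℕ, e ≤ b ∧ P = Xv ^ c * Yv ^ e}

/-- `W¹ = D_x`. -/
def W1 : Module.End ℂ R2 := Dx

/-- `W² = M_{x²}∘D_x + r·M_{xy}∘D_y − p·M_x`. -/
def W2 (r p : ℕ) : Module.End ℂ R2 :=
  Mf (Xv ^ 2) * Dx + (r : ℂ) • (Mf (Xv * Yv) * Dy) - (p : ℂ) • Mf Xv

/-- `W³ = M_x∘D_x − (p/2)·id`. -/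
def W3 (p : ℕ) : Module.End ℂ R2 := Mf Xv * Dx - ((p : ℂ) / 2) • 1

/-- `W⁴ = M_y∘D_y`. -/
def W4 : Module.End ℂ R2 := Mf Yv * Dy

/-- `W^{5+i} = M_{xⁱ}∘D_y`. -/
def W5i (i : ℕ) : Module.End ℂ R2 := Mf (Xv ^ i) * Dy

/-- The generating set `{W¹, …, W^{5+r}}` of the realization `𝔤^{24,r}_p`. -/
def Wset (r p : ℕ) : Set (Module.End ℂ R2) :=
  {W1, W2 r p, W3 p, W4} ∪ {T | ∃ i ≤ r, T = W5i i}

/-- The rank-2 space `V = R × R`. -/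
abbrev V2 : Type := R2 × R2

/-- The matrix operator `𝐓(u,v) = (A u + B v, C u + D v)`. -/
def matOp (A B C D : Module.End ℂ R2) : Module.End ℂ V2 :=
  LinearMap.prod
    (A ∘ₗ LinearMap.fst ℂ R2 R2 + B ∘ₗ LinearMap.snd ℂ R2 R2)
    (C ∘ₗ LinearMap.fst ℂ R2 R2 + D ∘ₗ LinearMap.snd ℂ R2 R2)

/-- The diagonal matrix operator `diag(A, B)`. -/
def dg (A B : Module.End ℂ R2) : Module.End ℂ V2 := matOp A 0 0 B

/-- The scalar differential operator with coefficients `f` supported on `F`. -/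
def diffOp (F : Finset (ℕ × ℕ)) (f : ℕ × ℕ → R2) : Module.End ℂ R2 :=
  ∑ ij ∈ F, Mf (f ij) * Dx ^ ij.1 * Dy ^ ij.2

/-- The index set `{(i,j) : i + j ≤ k}`. -/
def ordIdx (k : ℕ) : Finset (ℕ × ℕ) :=
  (Finset.range (k + 1) ×ˢ Finset.range (k + 1)).filter (fun ij => ij.1 + ij.2 ≤ k)

/-- A scalar differential operator with polynomial coefficients, of order at most `k`. -/
def IsDiffOpLE (A : Module.End ℂ R2) (k : ℕ) : Prop :=
  ∃ f : ℕ × ℕ → R2, A = diffOp (ordIdx k) f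

/-- A matrix differential operator of order at most `k`. -/
def IsMatDiffOpLE (P : Module.End ℂ V2) (k : ℕ) : Prop :=
  ∃ A B C D : Module.End ℂ R2, IsDiffOpLE A k ∧ IsDiffOpLE B k ∧ IsDiffOpLE C k ∧
    IsDiffOpLE D k ∧ P = matOp A B C D

/-- Compositions of elements of `S` which are matrix differential operators of
order at most `k`. -/
def matProdsOrd (k : ℕ) (S : Set (Module.End ℂ V2)) : Set (Module.End ℂ V2) :=
  {P | ∃ l : List (Module.End ℂ V2), (∀ a ∈ l, a ∈ S) ∧ l.prod = P ∧ IsMatDiffOpLE P k}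

/-- Compositions of at most `k` elements of `S`; the empty composition is the identity. -/
def matProdsLE (k : ℕ) (S : Set (Module.End ℂ V2)) : Set (Module.End ℂ V2) :=
  {P | ∃ l : List (Module.End ℂ V2), l.length ≤ k ∧ (∀ a ∈ l, a ∈ S) ∧ l.prod = P}

/-- `Tⁱ = diag(Wⁱ(p−1), Wⁱ(p))`. -/
def Tg1 : Module.End ℂ V2 := dg W1 W1
def Tg2 (r p : ℕ) : Module.End ℂ V2 := dg (W2 r (p - 1)) (W2 r p)
def Tg3 (p : ℕ) : Module.End ℂ V2 := dg (W3 (p - 1)) (W3 p)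
def Tg4 : Module.End ℂ V2 := dg W4 W4
def Tg5i (i : ℕ) : Module.End ℂ V2 := dg (W5i i) (W5i i)

/-- `J = diag(((p+1)/2)·id, (p/2)·id)`. -/
def Jgen (p : ℕ) : Module.End ℂ V2 :=
  dg ((((p : ℂ) + 1) / 2) • 1) (((p : ℂ) / 2) • 1)

/-- `Q⁻₀(u,v) = (0, u)`. -/
def Qm0 : Module.End ℂ V2 := matOp 0 0 1 0

/-- `Q⁻₁(u,v) = (0, x·u)`. -/
def Qm1 : Module.End ℂ V2 := matOp 0 0 (Mf Xv) 0

/-- `Q⁺₀(u,v) = ((M_x∘D_x + r·M_y∘D_y − p·id) v, 0)`. -/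
def Qp0 (r p : ℕ) : Module.End ℂ V2 :=
  matOp 0 (Mf Xv * Dx + (r : ℂ) • (Mf Yv * Dy) - (p : ℂ) • 1) 0 0

/-- `Q⁺₁(u,v) = (D_x v, 0)`. -/
def Qp1 : Module.End ℂ V2 := matOp 0 Dx 0 0

/-- `Q⁺_{2+α}(u,v) = (x^α·(D_y v), 0)`. -/
def Qp2 (α : ℕ) : Module.End ℂ V2 := matOp 0 (Mf (Xv ^ α) * Dy) 0 0

/-- The generating set `G` for the staircase rank-2 module. -/
def Gstair (r p : ℕ) : Set (Module.End ℂ V2) :=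
  {Tg1, Tg2 r p, Tg3 p, Tg4, Jgen p, Qm0, Qm1, Qp0 r p, Qp1} ∪
  {P | ∃ i ≤ r, P = Tg5i i} ∪
  {P | ∃ α : ℕ, α + 1 ≤ r ∧ P = Qp2 α}

/-- The staircase index set `{(i,j) : i + r·j ≤ p, j ≤ q}`. -/
def sIdx (r p q : ℕ) : Finset (ℕ × ℕ) :=
  (Finset.range (p + 1) ×ˢ Finset.range (q + 1)).filter (fun ij => ij.1 + r * ij.2 ≤ p)


/-!
A scalar differential operator is a sum of bihomogeneous parts `x^A y^e ∘ g ∘ ∂_y^d ∂ₓ^B`, where `g`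
is diagonal on monomials with a polynomial eigenvalue function, the symbol. Monomials being a basis,
each part inherits the conditions imposed on the operator: parts of positive `y`-degree vanish, and
a part raising the staircase level `i + r j` by `m` more than the target module allows has a symbol
vanishing on the top `m` diagonals of the staircase. Dividing by the equations of these diagonals,
one at a time, writes such a symbol on the staircase as their product times a polynomial of degree
lower by `m`. That product is exactly the symbol of the `m`-th power of `W²`, so the part agrees on
the staircase with a word of length at most the order. Nothing is lost when the staircase contains
the triangle of size `k`, because a polynomial of degree `k` vanishing on that triangle is zero.

For matrices, the diagonal idempotents are combinations of `J` and the identity, and a single `Q`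
moves a diagonal word to an off-diagonal position and supplies the change of level; this accounts
for the one additional letter.
-/

section Monomials

/-- The monomial `xⁱyʲ`. -/
def monoXY (i j : ℕ) : R2 := Xv ^ i * Yv ^ j

theorem monoXY_zero_right (i : ℕ) : monoXY i 0 = Xv ^ i := by
  rw [monoXY, pow_zero, mul_one]

theorem monoXY_eq_monomial (i j : ℕ) :
    monoXY i j = monomial (Finsupp.single 0 i + Finsupp.single 1 j) 1 := by
  rw [monoXY, Xv, Yv, X_pow_eq_monomial, X_pow_eq_monomial, monomial_mul, one_mul]

theorem monomial_eq_monoXY (m : Fin 2 →₀ ℕ) : monomial m (1 : ℂ) = monoXY (m 0) (m 1) := by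
  rw [monoXY_eq_monomial]
  congr 2
  ext t
  fin_cases t <;> simp

theorem end_ext_monoXY {S T : Module.End ℂ R2} (h : ∀ i j, S (monoXY i j) = T (monoXY i j)) :
    S = T := by
  refine (basisMonomials (Fin 2) ℂ).ext fun m => ?_
  simpa only [coe_basisMonomials, monomial_eq_monoXY] using h _ _

/-- The linear functional reading off the coefficient of `xᵘyᵛ`. -/
def coeffXY (u v : ℕ) : R2 →ₗ[ℂ] ℂ :=
  lcoeff ℂ (Finsupp.single 0 u + Finsupp.single 1 v)

theorem coeffXY_monoXY (u v i j : ℕ) :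
    coeffXY u v (monoXY i j) = if i = u ∧ j = v then 1 else 0 := by
  rw [monoXY_eq_monomial, coeffXY, lcoeff_apply, coeff_monomial]
  refine if_congr ?_ rfl rfl
  rw [DFunLike.ext_iff, Fin.forall_fin_two]
  simp

theorem coeffXY_eq_zero_of_mem_span {p : ℕ → ℕ → Prop} {f : R2} {u v : ℕ}
    (hf : f ∈ Submodule.span ℂ {P : R2 | ∃ i j, p i j ∧ P = monoXY i j}) (huv : ¬ p u v) :
    coeffXY u v f = 0 := by
  suffices Submodule.span ℂ {P : R2 | ∃ i j, p i j ∧ P = monoXY i j} ≤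
      LinearMap.ker (coeffXY u v) from this hf
  rw [Submodule.span_le]
  rintro _ ⟨i, j, hij, rfl⟩
  rw [SetLike.mem_coe, LinearMap.mem_ker, coeffXY_monoXY, if_neg]
  rintro ⟨rfl, rfl⟩
  exact huv hij

theorem Smod_eq_span (r p q : ℕ) :
    Smod r p q = Submodule.span ℂ
      {P : R2 | ∃ i j, (i + r * j ≤ p ∧ j ≤ q) ∧ P = monoXY i j} := by
  simp only [Smod, monoXY, and_assoc]

theorem monoXY_mem_Smod {r p q i j : ℕ} (hi : i + r * j ≤ p) (hj : j ≤ q) :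
    monoXY i j ∈ Smod r p q :=
  Submodule.subset_span ⟨i, j, hi, hj, rfl⟩

theorem monoXY_mem_Tmod {n i j : ℕ} (h : i + j ≤ n) : monoXY i j ∈ Tmod n :=
  Submodule.subset_span ⟨i, j, h, rfl⟩

theorem Smod_mono {r p p' q : ℕ} (h : p ≤ p') : Smod r p q ≤ Smod r p' q :=
  Submodule.span_mono fun _ ⟨i, j, hi, hj, hP⟩ => ⟨i, j, hi.trans h, hj, hP⟩

theorem Tmod_le_Smod {r p q k : ℕ} (hr : 1 ≤ r) (hk : k ≤ q) (hq : r * q ≤ p) :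
    Tmod k ≤ Smod r p q := by
  refine Submodule.span_mono ?_
  rintro _ ⟨i, j, hij, rfl⟩
  exact ⟨i, j, by nlinarith, by omega, rfl⟩

theorem Mf_add (f g : R2) : Mf (f + g) = Mf f + Mf g :=
  (LinearMap.mul ℂ R2).map_add f g

theorem Mf_smul (c : ℂ) (f : R2) : Mf (c • f) = c • Mf f :=
  (LinearMap.mul ℂ R2).map_smul c f

theorem Mf_one : Mf 1 = 1 :=
  LinearMap.mulLeft_one ℂ R2

theorem Mf_mul (f g : R2) : Mf (f * g) = Mf f * Mf g :=
  LinearMap.mulLeft_mul ℂ R2 f g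

theorem Mf_monoXY_apply (a b i j : ℕ) :
    Mf (monoXY a b) (monoXY i j) = monoXY (i + a) (j + b) := by
  simp only [Mf, LinearMap.mulLeft_apply, monoXY]
  ring

theorem Dx_monoXY (i j : ℕ) : Dx (monoXY i j) = (i : ℂ) • monoXY (i - 1) j := by
  simp only [Dx, monoXY, Xv, Yv, Derivation.coeFn_coe, Derivation.leibniz, Derivation.leibniz_pow,
    pderiv_X, ne_eq, one_ne_zero, not_false_eq_true, Pi.single_eq_of_ne, smul_eq_mul, mul_zero,
    Pi.single_eq_same, mul_one, nsmul_eq_mul, zero_add, smul_eq_C_mul, map_natCast]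
  ring

theorem Dy_monoXY (i j : ℕ) : Dy (monoXY i j) = (j : ℂ) • monoXY i (j - 1) := by
  simp only [Dy, monoXY, Xv, Yv, Derivation.coeFn_coe, Derivation.leibniz, Derivation.leibniz_pow,
    pderiv_X, Pi.single_eq_same, smul_eq_mul, mul_one, nsmul_eq_mul, ne_eq, zero_ne_one,
    not_false_eq_true, Pi.single_eq_of_ne, mul_zero, add_zero, smul_eq_C_mul, map_natCast]
  ring

theorem Dx_pow_monoXY (s i j : ℕ) :
    (Dx ^ s) (monoXY i j) = (i.descFactorial s : ℂ) • monoXY (i - s) j := by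
  induction s with
  | zero => simp
  | succ s ih =>
    rw [pow_succ', Module.End.mul_apply, ih, map_smul, Dx_monoXY, smul_smul, Nat.sub_sub,
      Nat.descFactorial_succ, mul_comm, Nat.cast_mul]

theorem Dy_pow_monoXY (s i j : ℕ) :
    (Dy ^ s) (monoXY i j) = (j.descFactorial s : ℂ) • monoXY i (j - s) := by
  induction s with
  | zero => simp
  | succ s ih =>
    rw [pow_succ', Module.End.mul_apply, ih, map_smul, Dy_monoXY, smul_smul, Nat.sub_sub,
      Nat.descFactorial_succ, mul_comm, Nat.cast_mul]

end Monomials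

section PolynomialFunctions

/-- The functions `ℕ × ℕ → ℂ` given by polynomials of total degree less than `n`. These are the
eigenvalue functions of the diagonal parts of differential operators; bounding the degree strictly
lets `polyFun 0` be zero. -/
def polyFun (n : ℕ) : Submodule ℂ (ℕ × ℕ → ℂ) :=
  Submodule.span ℂ {g | ∃ s t : ℕ, s + t < n ∧ g = fun z => (z.1 : ℂ) ^ s * (z.2 : ℂ) ^ t}

theorem polyFun_zero : polyFun 0 = ⊥ := by
  simp [polyFun]

theorem polyFun_mono {m n : ℕ} (h : m ≤ n) : polyFun m ≤ polyFun n :=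
  Submodule.span_mono fun _ ⟨s, t, hst, hg⟩ => ⟨s, t, hst.trans_le h, hg⟩

theorem eval_mul_eval_mem_polyFun {P Q : Polynomial ℂ} {n : ℕ}
    (h : P.natDegree + Q.natDegree < n) :
    (fun z : ℕ × ℕ => P.eval (z.1 : ℂ) * Q.eval (z.2 : ℂ)) ∈ polyFun n := by
  have expand : (fun z : ℕ × ℕ => P.eval (z.1 : ℂ) * Q.eval (z.2 : ℂ)) =
      ∑ s ∈ Finset.range (P.natDegree + 1), ∑ t ∈ Finset.range (Q.natDegree + 1),
        (P.coeff s * Q.coeff t) • fun z : ℕ × ℕ => (z.1 : ℂ) ^ s * (z.2 : ℂ) ^ t := by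
    ext z
    simp only [Finset.sum_apply, Pi.smul_apply, smul_eq_mul, Polynomial.eval_eq_sum_range,
      Finset.sum_mul_sum]
    exact Finset.sum_congr rfl fun s _ => Finset.sum_congr rfl fun t _ => by ring
  rw [expand]
  refine Submodule.sum_mem _ fun s hs => Submodule.sum_mem _ fun t ht =>
    Submodule.smul_mem _ _ (Submodule.subset_span ⟨s, t, ?_, rfl⟩)
  rw [Finset.mem_range] at hs ht
  omega

theorem mem_polyFun_of_eq_eval_mul_eval {g : ℕ × ℕ → ℂ} (P Q : Polynomial ℂ) {n : ℕ}
    (hg : ∀ z, g z = P.eval (z.1 : ℂ) * Q.eval (z.2 : ℂ))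
    (h : P.natDegree + Q.natDegree < n) : g ∈ polyFun n := by
  rw [show g = _ from funext hg]
  exact eval_mul_eval_mem_polyFun h

theorem exists_translate_mem_polyFun (a b : ℕ) {n : ℕ} {g : ℕ × ℕ → ℂ} (hg : g ∈ polyFun n) :
    ∃ g' ∈ polyFun n, ∀ z, g' (z + (a, b)) = g z := by
  suffices polyFun n ≤ (polyFun n).map (LinearMap.funLeft ℂ ℂ (· + (a, b))) by
    obtain ⟨g', hg', rfl⟩ := this hg
    exact ⟨g', hg', fun _ => rfl⟩
  refine Submodule.span_le.2 ?_
  rintro _ ⟨s, t, hst, rfl⟩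
  refine ⟨fun z => ((Polynomial.X - Polynomial.C (a : ℂ)) ^ s).eval (z.1 : ℂ) *
    ((Polynomial.X - Polynomial.C (b : ℂ)) ^ t).eval (z.2 : ℂ), eval_mul_eval_mem_polyFun ?_, ?_⟩
  · simpa only [Polynomial.natDegree_pow, Polynomial.natDegree_X_sub_C, mul_one] using hst
  · ext z
    simp [LinearMap.funLeft_apply]

/-- The affine function `(i, j) ↦ i + r j - L`, which vanishes on the staircase diagonal of
level `L`. -/
def levelFun (r : ℕ) (L : ℂ) : ℕ × ℕ → ℂ := fun z => z.1 + r * z.2 - L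

theorem levelFun_mul_mem_polyFun (r : ℕ) (L : ℂ) {n : ℕ} {h : ℕ × ℕ → ℂ} (hh : h ∈ polyFun n) :
    levelFun r L * h ∈ polyFun (n + 1) := by
  suffices polyFun n ≤ (polyFun (n + 1)).comap (LinearMap.mulLeft ℂ (levelFun r L)) from this hh
  refine Submodule.span_le.2 ?_
  rintro _ ⟨s, t, hst, rfl⟩
  have expand : levelFun r L * (fun z => (z.1 : ℂ) ^ s * (z.2 : ℂ) ^ t) =
      (fun z => (z.1 : ℂ) ^ (s + 1) * (z.2 : ℂ) ^ t) +
        (r : ℂ) • (fun z => (z.1 : ℂ) ^ s * (z.2 : ℂ) ^ (t + 1)) -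
        L • fun z => (z.1 : ℂ) ^ s * (z.2 : ℂ) ^ t := by
    ext z
    simp only [levelFun, Pi.mul_apply, Pi.add_apply, Pi.sub_apply, Pi.smul_apply, smul_eq_mul]
    ring
  rw [SetLike.mem_coe, Submodule.mem_comap, LinearMap.mulLeft_apply, expand]
  exact sub_mem (add_mem (Submodule.subset_span ⟨s + 1, t, by omega, rfl⟩)
    (Submodule.smul_mem _ _ (Submodule.subset_span ⟨s, t + 1, by omega, rfl⟩)))
    (Submodule.smul_mem _ _ (Submodule.subset_span ⟨s, t, by omega, rfl⟩))

theorem exists_pow_mul_eval_eq_levelFun_mul_add (r : ℕ) (L : ℂ) (s : ℕ) :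
    ∀ {n : ℕ} (Q : Polynomial ℂ), s + Q.natDegree < n →
      ∃ h ∈ polyFun (n - 1), ∃ c ∈ Polynomial.degreeLT ℂ n,
        ∀ z : ℕ × ℕ,
          (z.1 : ℂ) ^ s * Q.eval (z.2 : ℂ) = levelFun r L z * h z + c.eval (z.2 : ℂ) := by
  induction s with
  | zero =>
    refine fun {n} Q hQ => ⟨0, zero_mem _, Q, Polynomial.mem_degreeLT.2 ?_, by simp⟩
    exact Q.degree_le_natDegree.trans_lt (by exact_mod_cast (by omega))
  | succ s ih =>
    intro n Q hQ
    -- on the level line `z.1` equals `L - r z.2`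
    set lineX : Polynomial ℂ := Polynomial.C L - Polynomial.C (r : ℂ) * Polynomial.X with lineX_eq
    have natDegree_le : (lineX * Q).natDegree ≤ 1 + Q.natDegree :=
      Polynomial.natDegree_mul_le_of_le (by rw [lineX_eq]; compute_degree) le_rfl
    obtain ⟨h, hh, c, hc, hsc⟩ := ih (lineX * Q) (n := n) (by omega)
    have quotient_mem := eval_mul_eval_mem_polyFun (P := Polynomial.X ^ s) (Q := Q) (n := n - 1)
      (by rw [Polynomial.natDegree_X_pow]; omega)
    refine ⟨_, add_mem quotient_mem hh, c, hc, fun z => ?_⟩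
    have hz := hsc z
    simp only [lineX_eq, Polynomial.eval_mul, Polynomial.eval_sub, Polynomial.eval_C,
      Polynomial.eval_X] at hz
    simp only [levelFun, Pi.add_apply, Polynomial.eval_pow, Polynomial.eval_X] at hz ⊢
    linear_combination hz

theorem exists_eq_levelFun_mul_add (r : ℕ) (L : ℂ) {n : ℕ} {g : ℕ × ℕ → ℂ} (hg : g ∈ polyFun n) :
    ∃ h ∈ polyFun (n - 1), ∃ c ∈ Polynomial.degreeLT ℂ n,
      ∀ z, g z = levelFun r L z * h z + c.eval (z.2 : ℂ) := by
  suffices polyFun n ≤ (polyFun (n - 1)).map (LinearMap.mulLeft ℂ (levelFun r L)) ⊔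
      (Polynomial.degreeLT ℂ n).map (LinearMap.pi fun z : ℕ × ℕ => Polynomial.leval (z.2 : ℂ)) by
    obtain ⟨_, ⟨h, hh, rfl⟩, _, ⟨c, hc, rfl⟩, rfl⟩ := Submodule.mem_sup.1 (this hg)
    exact ⟨h, hh, c, hc, fun _ => rfl⟩
  refine Submodule.span_le.2 ?_
  rintro _ ⟨s, t, hst, rfl⟩
  obtain ⟨h, hh, c, hc, hsum⟩ :=
    exists_pow_mul_eval_eq_levelFun_mul_add r L s (n := n) (Polynomial.X ^ t) (by simpa using hst)
  refine Submodule.mem_sup.2 ⟨_, ⟨h, hh, rfl⟩, _, ⟨c, hc, rfl⟩, funext fun z => ?_⟩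
  simpa using (hsum z).symm

theorem exists_eq_levelFun_mul_of_vanishing {r L n : ℕ} {g : ℕ × ℕ → ℂ} (hg : g ∈ polyFun n)
    (J : Finset ℕ) (hJ : ∀ j ∈ J, ∃ i, i + r * j = L ∧ g (i, j) = 0) :
    ∃ h ∈ polyFun (n - 1), (∀ i, ∀ j ∈ J, g (i, j) = levelFun r L (i, j) * h (i, j)) ∧
      (n ≤ J.card → g = levelFun r L * h) := by
  obtain ⟨h, hh, c, hc, hdiv⟩ := exists_eq_levelFun_mul_add r L hg
  have eval_eq_zero : ∀ j ∈ J, c.eval (j : ℂ) = 0 := by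
    intro j hj
    obtain ⟨i, rfl, hij⟩ := hJ j hj
    simpa [levelFun, hij] using (hdiv (i, j)).symm
  refine ⟨h, hh, fun i j hj => by rw [hdiv, eval_eq_zero j hj, add_zero], fun hn => ?_⟩
  have hc0 : c = 0 :=
    Polynomial.eq_zero_of_degree_lt_of_eval_index_eq_zero (v := fun j : ℕ => (j : ℂ)) J
      (Nat.cast_injective.injOn)
      ((Polynomial.mem_degreeLT.1 hc).trans_le (by exact_mod_cast hn)) eval_eq_zero
  ext z
  rw [hdiv, hc0, Polynomial.eval_zero, add_zero, Pi.mul_apply]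

theorem eq_zero_of_vanishing_on_triangle {n : ℕ} {g : ℕ × ℕ → ℂ} (hg : g ∈ polyFun n)
    (hvan : ∀ i j, i + j < n → g (i, j) = 0) : g = 0 := by
  induction n generalizing g with
  | zero => simpa [polyFun_zero] using hg
  | succ n ih =>
    obtain ⟨h, hh, -, hgh⟩ := exists_eq_levelFun_mul_of_vanishing (r := 1) (L := n) hg
      (Finset.range (n + 1)) fun j hj => by
        rw [Finset.mem_range] at hj
        exact ⟨n - j, by omega, hvan _ _ (by omega)⟩
    have hg_eq := hgh (Finset.card_range _).ge
    rw [hg_eq, ih hh, mul_zero]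
    intro i j hij
    have hprod : levelFun 1 n (i, j) * h (i, j) = 0 := by
      rw [← Pi.mul_apply, ← hg_eq, hvan i j (by omega)]
    refine (mul_eq_zero.1 hprod).resolve_left fun hlevel => hij.ne ?_
    rw [levelFun, Nat.cast_one, one_mul, sub_eq_zero] at hlevel
    exact_mod_cast hlevel

/-- The product of the level functions of the `m` diagonals of levels `L, L - 1, …, L - m + 1`. -/
def levelProd (r : ℕ) (L : ℂ) (m : ℕ) : ℕ × ℕ → ℂ :=
  ∏ t ∈ Finset.range m, levelFun r (L - t)

theorem levelProd_succ (r : ℕ) (L : ℂ) (m : ℕ) :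
    levelProd r L (m + 1) = levelProd r L m * levelFun r (L - m) :=
  Finset.prod_range_succ _ _

theorem levelProd_succ' (r : ℕ) (L : ℂ) (m : ℕ) :
    levelProd r L (m + 1) = levelProd r (L - 1) m * levelFun r L := by
  simp only [levelProd, Finset.prod_range_succ', Nat.cast_zero, sub_zero, Nat.cast_add,
    Nat.cast_one, sub_sub, add_comm]

theorem levelProd_apply_eq_zero {r L m i j : ℕ} (hle : i + r * j ≤ L) (hlt : L < i + r * j + m) :
    levelProd r L m (i, j) = 0 := by
  rw [levelProd, Finset.prod_apply]
  refine Finset.prod_eq_zero (i := L - (i + r * j)) (Finset.mem_range.2 (by omega)) ?_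
  rw [levelFun, Nat.cast_sub hle]
  push_cast
  ring

theorem levelProd_apply_ne_zero {r L m i j : ℕ} (h : i + r * j + m ≤ L) :
    levelProd r L m (i, j) ≠ 0 := by
  rw [levelProd, Finset.prod_apply, Finset.prod_ne_zero_iff]
  intro t ht hzero
  rw [Finset.mem_range] at ht
  have : ((i + r * j + t : ℕ) : ℂ) = L := by
    rw [levelFun] at hzero
    push_cast
    linear_combination hzero
  have := Nat.cast_injective this
  omega

theorem levelProd_mul_mem_polyFun (r : ℕ) (L : ℂ) {m n : ℕ} {h : ℕ × ℕ → ℂ}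
    (hh : h ∈ polyFun (n - m)) : levelProd r L m * h ∈ polyFun n := by
  induction m generalizing h with
  | zero => simpa [levelProd] using hh
  | succ m ih =>
    rw [levelProd_succ, mul_assoc]
    by_cases hmn : m < n
    · have hlevel := levelFun_mul_mem_polyFun r (L - m) hh
      rw [Nat.sub_add_eq, Nat.sub_add_cancel (by omega)] at hlevel
      exact ih hlevel
    · rw [show n - (m + 1) = 0 by omega, polyFun_zero, Submodule.mem_bot] at hh
      simp only [hh, mul_zero, zero_mem]

theorem exists_eq_levelProd_mul_of_vanishing {r L n m : ℕ} {g : ℕ × ℕ → ℂ} (hg : g ∈ polyFun n)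
    (J : Finset ℕ) (hvan : ∀ i, ∀ j ∈ J, i + r * j ≤ L → L < i + r * j + m → g (i, j) = 0) :
    ∃ h ∈ polyFun (n - m), ∀ i, ∀ j ∈ J, i + r * j ≤ L →
      g (i, j) = levelProd r L m (i, j) * h (i, j) := by
  induction m with
  | zero => exact ⟨g, hg, fun i j _ _ => by simp [levelProd]⟩
  | succ m ih =>
    by_cases hLm : L < m
    · refine ⟨0, zero_mem _, fun i j hj hij => ?_⟩
      rw [hvan i j hj hij (by omega), Pi.zero_apply, mul_zero]
    obtain ⟨h, hh, hgh⟩ := ih fun i j hj hle hlt => hvan i j hj hle (by omega)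
    obtain ⟨h', hh', hhh', -⟩ := exists_eq_levelFun_mul_of_vanishing (r := r) (L := L - m) hh
      (J.filter fun j => r * j ≤ L - m) fun j hj => by
        rw [Finset.mem_filter] at hj
        obtain ⟨hj, hrj⟩ := hj
        refine ⟨L - m - r * j, by omega, ?_⟩
        have hzero := hgh (L - m - r * j) j hj (by omega)
        rw [hvan _ j hj (by omega) (by omega)] at hzero
        exact (mul_eq_zero.1 hzero.symm).resolve_left (levelProd_apply_ne_zero (by omega))
    refine ⟨h', hh', fun i j hj hle => ?_⟩
    rw [levelProd_succ, hgh i j hj hle, Pi.mul_apply, mul_assoc]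
    by_cases hrj : r * j ≤ L - m
    · rw [hhh' i j (Finset.mem_filter.2 ⟨hj, hrj⟩), Nat.cast_sub (by omega)]
    · rw [levelProd_apply_eq_zero hle (by omega), zero_mul, zero_mul]

end PolynomialFunctions

section HomogeneousOperators

/-- The linear map underlying `diagOp`. -/
def diagLin : (ℕ × ℕ → ℂ) →ₗ[ℂ] Module.End ℂ R2 :=
  ((basisMonomials (Fin 2) ℂ).constr ℂ).toLinearMap ∘ₗ LinearMap.pi fun m : Fin 2 →₀ ℕ =>
    LinearMap.toSpanSingleton ℂ R2 (monoXY (m 0) (m 1)) ∘ₗ LinearMap.proj (m 0, m 1)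

theorem diagLin_monoXY (g : ℕ × ℕ → ℂ) (i j : ℕ) :
    diagLin g (monoXY i j) = g (i, j) • monoXY i j := by
  rw [monoXY_eq_monomial]
  refine ((basisMonomials (Fin 2) ℂ).constr_basis ℂ
    (fun m => g (m 0, m 1) • monoXY (m 0) (m 1)) _).trans ?_
  simp [monoXY_eq_monomial]

/-- The diagonal operator `xⁱyʲ ↦ g(i, j) xⁱyʲ` with eigenvalue function `g`. -/
def diagOp : (ℕ × ℕ → ℂ) →ₐ[ℂ] Module.End ℂ R2 :=
  AlgHom.ofLinearMap diagLin
    (end_ext_monoXY fun i j => by rw [diagLin_monoXY, Pi.one_apply, one_smul, Module.End.one_apply])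
    (fun g h => end_ext_monoXY fun i j => by
      rw [Module.End.mul_apply, diagLin_monoXY, diagLin_monoXY, map_smul, diagLin_monoXY,
        smul_smul, Pi.mul_apply, mul_comm])

theorem diagOp_monoXY (g : ℕ × ℕ → ℂ) (i j : ℕ) :
    diagOp g (monoXY i j) = g (i, j) • monoXY i j :=
  diagLin_monoXY g i j

theorem Mf_Xv_mul_Dx : Mf Xv * Dx = diagOp fun z => (z.1 : ℂ) := by
  refine end_ext_monoXY fun i j => ?_
  rw [diagOp_monoXY, Module.End.mul_apply, Dx_monoXY, map_smul]
  rcases i with - | i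
  · simp
  · rw [show Xv = monoXY 1 0 by simp [monoXY], Mf_monoXY_apply, Nat.add_sub_cancel, add_zero]

theorem Mf_Yv_mul_Dy : Mf Yv * Dy = diagOp fun z => (z.2 : ℂ) := by
  refine end_ext_monoXY fun i j => ?_
  rw [diagOp_monoXY, Module.End.mul_apply, Dy_monoXY, map_smul]
  rcases j with - | j
  · simp
  · rw [show Yv = monoXY 0 1 by simp [monoXY], Mf_monoXY_apply, Nat.add_sub_cancel, add_zero]

theorem euler_sub_eq_diagOp (r : ℕ) (L : ℂ) :
    Mf Xv * Dx + (r : ℂ) • (Mf Yv * Dy) - L • 1 = diagOp (levelFun r L) := by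
  rw [Mf_Xv_mul_Dx, Mf_Yv_mul_Dy, ← map_smul, ← map_one diagOp, ← map_smul, ← map_add, ← map_sub]
  congr 1
  ext z
  simp [levelFun]

theorem W2_eq (r P : ℕ) : W2 r P = Mf Xv * diagOp (levelFun r P) := by
  rw [← euler_sub_eq_diagOp, W2, Mf_mul, pow_two, Mf_mul]
  simp only [mul_sub, mul_add, mul_smul_comm, mul_assoc, mul_one]

/-- The operator `x^A y^e ∘ g ∘ ∂_y^d ∂ₓ^B`, where the symbol `g` acts diagonally. -/
def normalOp (A e B d : ℕ) : (ℕ × ℕ → ℂ) →ₗ[ℂ] Module.End ℂ R2 :=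
  LinearMap.mulLeft ℂ (Mf (monoXY A e)) ∘ₗ LinearMap.mulRight ℂ (Dy ^ d * Dx ^ B) ∘ₗ
    diagOp.toLinearMap

theorem normalOp_apply (A e B d : ℕ) (g : ℕ × ℕ → ℂ) :
    normalOp A e B d g = Mf (monoXY A e) * (diagOp g * (Dy ^ d * Dx ^ B)) :=
  rfl

theorem normalOp_monoXY (A e B d : ℕ) (g : ℕ × ℕ → ℂ) (i j : ℕ) :
    normalOp A e B d g (monoXY i j) =
      ((i.descFactorial B * j.descFactorial d : ℕ) * g (i - B, j - d)) •
        monoXY (i - B + A) (j - d + e) := by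
  simp only [normalOp_apply, Module.End.mul_apply, Dy_pow_monoXY, Dx_pow_monoXY, map_smul,
    diagOp_monoXY, Mf_monoXY_apply, smul_smul, Nat.cast_mul]

/-- The operators homogeneous of bidegree `κ`, parametrized by their symbol: `normalOp` with the
negative parts of `κ` as orders of derivation. -/
def homogOp (κ : ℤ × ℤ) : (ℕ × ℕ → ℂ) →ₗ[ℂ] Module.End ℂ R2 :=
  normalOp κ.1.toNat κ.2.toNat (-κ.1).toNat (-κ.2).toNat

/-- The symbols of the differential operators of order at most `k` and bidegree `κ`. -/
def symbolSpace (k : ℕ) (κ : ℤ × ℤ) : Submodule ℂ (ℕ × ℕ → ℂ) :=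
  polyFun (k + 1 - (-κ.1).toNat - (-κ.2).toNat)

theorem coeffXY_homogOp (κ κ' : ℤ × ℤ) (g : ℕ × ℕ → ℂ) (i j : ℕ) :
    coeffXY (i + κ.1.toNat) (j + κ.2.toNat)
        (homogOp κ' g (monoXY (i + (-κ.1).toNat) (j + (-κ.2).toNat))) =
      if κ' = κ then
        ((i + (-κ.1).toNat).descFactorial (-κ.1).toNat *
          (j + (-κ.2).toNat).descFactorial (-κ.2).toNat : ℕ) * g (i, j)
      else 0 := by
  rw [homogOp, normalOp_monoXY, map_smul, coeffXY_monoXY, smul_eq_mul]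
  split_ifs with hmono hκ hκ
  · subst hκ
    simp
  · rw [mul_one, mul_eq_zero, Nat.cast_eq_zero, mul_eq_zero, Nat.descFactorial_eq_zero_iff_lt,
      Nat.descFactorial_eq_zero_iff_lt]
    contrapose! hκ
    exact Prod.ext (by omega) (by omega)
  · subst hκ
    exact absurd ⟨by omega, by omega⟩ hmono
  · rw [mul_zero]

theorem symbol_apply_eq_zero {K : Finset (ℤ × ℤ)} {g : ℤ × ℤ → ℕ × ℕ → ℂ} {κ : ℤ × ℤ}
    (hκ : κ ∈ K) {i j : ℕ}
    (h : coeffXY (i + κ.1.toNat) (j + κ.2.toNat)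
      ((∑ κ' ∈ K, homogOp κ' (g κ')) (monoXY (i + (-κ.1).toNat) (j + (-κ.2).toNat))) = 0) :
    g κ (i, j) = 0 := by
  simp only [LinearMap.sum_apply, map_sum, coeffXY_homogOp, Finset.sum_ite_eq', hκ, if_true] at h
  refine (mul_eq_zero.1 h).resolve_left ?_
  simp [Nat.descFactorial_eq_zero_iff_lt]

theorem homogOp_monoXY_congr {κ : ℤ × ℤ} {g h : ℕ × ℕ → ℂ} {i j : ℕ}
    (hgh : ∀ i' j', i = i' + (-κ.1).toNat → j = j' + (-κ.2).toNat → g (i', j') = h (i', j')) :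
    homogOp κ g (monoXY i j) = homogOp κ h (monoXY i j) := by
  rw [homogOp, normalOp_monoXY, normalOp_monoXY]
  by_cases hle : (-κ.1).toNat ≤ i ∧ (-κ.2).toNat ≤ j
  · rw [hgh _ _ (Nat.sub_add_cancel hle.1).symm (Nat.sub_add_cancel hle.2).symm]
  · have hzero : i.descFactorial (-κ.1).toNat * j.descFactorial (-κ.2).toNat = 0 := by
      rw [mul_eq_zero, Nat.descFactorial_eq_zero_iff_lt, Nat.descFactorial_eq_zero_iff_lt]
      omega
    rw [hzero, Nat.cast_zero, zero_mul, zero_mul]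

theorem symbol_eq_of_eqOn_Tmod {k : ℕ} {κ : ℤ × ℤ} {g h : ℕ × ℕ → ℂ} (hg : g ∈ symbolSpace k κ)
    (hh : h ∈ symbolSpace k κ) (heq : ∀ w ∈ Tmod k, homogOp κ g w = homogOp κ h w) : g = h := by
  rw [← sub_eq_zero]
  refine eq_zero_of_vanishing_on_triangle (sub_mem hg hh) fun i j hij => ?_
  refine symbol_apply_eq_zero (g := fun _ => g - h) (Finset.mem_singleton_self κ) ?_
  rw [Finset.sum_singleton, map_sub, LinearMap.sub_apply,
    heq _ (monoXY_mem_Tmod (by omega)), sub_self, map_zero]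

theorem Mf_monoXY_mul_Dx_pow_mul_Dy_pow (α β s t : ℕ) :
    Mf (monoXY α β) * Dx ^ s * Dy ^ t = homogOp ((α : ℤ) - s, (β : ℤ) - t)
      fun z => (z.1.descFactorial (min s α) : ℂ) * z.2.descFactorial (min t β) := by
  refine end_ext_monoXY fun i j => ?_
  have descFactorial_split (n s α : ℕ) :
      (n.descFactorial s : ℂ) =
        n.descFactorial (s - α) * (n - (s - α)).descFactorial (min s α) := by
    rw [← Nat.descFactorial_mul_descFactorial (Nat.sub_le s α), Nat.sub_sub_eq_min, mul_comm,
      Nat.cast_mul]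
  have coeff_eq : (j.descFactorial t * i.descFactorial s : ℂ) =
      (i.descFactorial (s - α) * j.descFactorial (t - β) : ℕ) *
        ((i - (s - α)).descFactorial (min s α) * (j - (t - β)).descFactorial (min t β)) := by
    rw [descFactorial_split i s α, descFactorial_split j t β]
    push_cast
    ring
  simp only [homogOp, normalOp_monoXY, Module.End.mul_apply, Dy_pow_monoXY, Dx_pow_monoXY,
    map_smul, Mf_monoXY_apply, smul_smul, neg_sub, Int.toNat_sub, ← coeff_eq]
  by_cases hle : s ≤ i ∧ t ≤ j
  · congr 2 <;> omega
  · rw [not_and_or, not_le, not_le, ← Nat.descFactorial_eq_zero_iff_lt,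
      ← Nat.descFactorial_eq_zero_iff_lt] at hle
    rcases hle with hle | hle <;> simp [hle]

theorem descFactorial_mul_mem_polyFun {a b n : ℕ} (h : a + b < n) :
    (fun z : ℕ × ℕ => (z.1.descFactorial a : ℂ) * z.2.descFactorial b) ∈ polyFun n :=
  mem_polyFun_of_eq_eval_mul_eval (descPochhammer ℂ a) (descPochhammer ℂ b)
    (fun z => by simp only [descPochhammer_eval_eq_descFactorial])
    (by simpa only [descPochhammer_natDegree] using h)

theorem exists_eq_sum_homogOp {T : Module.End ℂ R2} {k : ℕ} (hT : IsDiffOpLE T k) :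
    ∃ (K : Finset (ℤ × ℤ)) (g : ℤ × ℤ → ℕ × ℕ → ℂ),
      (∀ κ, g κ ∈ symbolSpace k κ) ∧ T = ∑ κ ∈ K, homogOp κ (g κ) := by
  obtain ⟨f, rfl⟩ := hT
  have term_mem (s t : ℕ) (hst : s + t ≤ k) (F : R2) :
      Mf F * Dx ^ s * Dy ^ t ∈ ⨆ κ, (symbolSpace k κ).map (homogOp κ) := by
    induction F using MvPolynomial.induction_on' with
    | monomial m c =>
      rw [show monomial m c = c • monoXY (m 0) (m 1) by
          rw [← monomial_eq_monoXY, smul_monomial, smul_eq_mul, mul_one],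
        Mf_smul, smul_mul_assoc, smul_mul_assoc, Mf_monoXY_mul_Dx_pow_mul_Dy_pow]
      refine Submodule.smul_mem _ _ (Submodule.mem_iSup_of_mem _ ⟨_, ?_, rfl⟩)
      refine descFactorial_mul_mem_polyFun ?_
      simp only [neg_sub, Int.toNat_sub]
      omega
    | add F₁ F₂ h₁ h₂ =>
      rw [Mf_add, add_mul, add_mul]
      exact add_mem h₁ h₂
  have hmem : diffOp (ordIdx k) f ∈ ⨆ κ, (symbolSpace k κ).map (homogOp κ) :=
    Submodule.sum_mem _ fun ij hij => term_mem _ _ (Finset.mem_filter.1 hij).2 _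
  obtain ⟨u, hu, hsum⟩ := (Submodule.mem_iSup_iff_exists_finsupp _ _).1 hmem
  choose g hg hgu using hu
  exact ⟨u.support, g, hg, by simp only [← hsum, Finsupp.sum, hgu]⟩

end HomogeneousOperators

section Words

theorem mul_mem_submodule_pow {E : Type*} [Semiring E] [Algebra ℂ E] {M : Submodule ℂ E}
    (h : 1 ≤ M) {a b n : ℕ} (hab : a + b ≤ n) {x y : E} (hx : x ∈ M ^ a) (hy : y ∈ M ^ b) :
    x * y ∈ M ^ n :=
  pow_le_pow_right' h hab ((pow_add M a b).symm ▸ Submodule.mul_mem_mul hx hy)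

theorem diagOp_mul_Mf (g : ℕ × ℕ → ℂ) (a b : ℕ) :
    diagOp g * Mf (monoXY a b) = Mf (monoXY a b) * diagOp fun z => g (z + (a, b)) :=
  end_ext_monoXY fun i j => by
    simp only [Module.End.mul_apply, Mf_monoXY_apply, diagOp_monoXY, map_smul, Prod.mk_add_mk]

theorem diagOp_mul_Dy_pow_mul_Dx_pow (g : ℕ × ℕ → ℂ) (B d : ℕ) :
    diagOp (fun z => g (z + (B, d))) * (Dy ^ d * Dx ^ B) = Dy ^ d * Dx ^ B * diagOp g := by
  refine end_ext_monoXY fun i j => ?_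
  simp only [Module.End.mul_apply, Dx_pow_monoXY, Dy_pow_monoXY, diagOp_monoXY, map_smul,
    smul_smul, Prod.mk_add_mk]
  by_cases hle : B ≤ i ∧ d ≤ j
  · rw [Nat.sub_add_cancel hle.1, Nat.sub_add_cancel hle.2]
    congr 1
    ring
  · rw [not_and_or, not_le, not_le, ← Nat.descFactorial_eq_zero_iff_lt,
      ← Nat.descFactorial_eq_zero_iff_lt] at hle
    rcases hle with hle | hle <;> simp [hle]

theorem diagOp_mul_normalOp (f : ℕ × ℕ → ℂ) (A e B d : ℕ) (g : ℕ × ℕ → ℂ) :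
    diagOp f * normalOp A e B d g = normalOp A e B d ((fun z => f (z + (A, e))) * g) := by
  rw [normalOp_apply, normalOp_apply, ← mul_assoc, diagOp_mul_Mf, mul_assoc, map_mul, mul_assoc]

theorem Mf_mul_normalOp (a b A e B d : ℕ) (g : ℕ × ℕ → ℂ) :
    Mf (monoXY a b) * normalOp A e B d g = normalOp (a + A) (b + e) B d g := by
  rw [normalOp_apply, normalOp_apply, ← mul_assoc, ← Mf_mul, monoXY, monoXY, monoXY]
  congr 2
  ring

theorem Dy_mul_Mf_Xv_pow (A : ℕ) : Dy * Mf (Xv ^ A) = Mf (Xv ^ A) * Dy := by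
  rw [← monoXY_zero_right]
  exact end_ext_monoXY fun i j => by
    simp only [Module.End.mul_apply, Mf_monoXY_apply, Dy_monoXY, map_smul, add_zero]

/-- The span of the identity and of the generators `W¹, …, W^{5+r}` of `𝔤^{24,r}_P`; its `n`-th
power is the span of the words of length at most `n`. -/
def wordSpan (r P : ℕ) : Submodule ℂ (Module.End ℂ R2) :=
  Submodule.span ℂ ({1} ∪ Wset r P)

theorem one_le_wordSpan (r P : ℕ) : 1 ≤ wordSpan r P :=
  Submodule.one_le.2 (Submodule.subset_span (Or.inl rfl))

theorem Wset_subset_wordSpan (r P : ℕ) : Wset r P ⊆ wordSpan r P :=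
  Set.subset_union_right.trans Submodule.subset_span

theorem Dx_mem_wordSpan (r P : ℕ) : Dx ∈ wordSpan r P :=
  Wset_subset_wordSpan r P (by simp [Wset, W1])

theorem W2_mem_wordSpan (r P : ℕ) : W2 r P ∈ wordSpan r P :=
  Wset_subset_wordSpan r P (by simp [Wset])

theorem W5i_mem_wordSpan {r i : ℕ} (P : ℕ) (h : i ≤ r) : W5i i ∈ wordSpan r P :=
  Wset_subset_wordSpan r P (Or.inr ⟨i, h, rfl⟩)

theorem Mf_Xv_mul_Dx_mem_wordSpan (r P : ℕ) : Mf Xv * Dx ∈ wordSpan r P := by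
  rw [← sub_add_cancel (Mf Xv * Dx) (((P : ℂ) / 2) • 1)]
  exact add_mem (Wset_subset_wordSpan r P (by simp [Wset, W3]))
    (Submodule.smul_mem _ _ (Submodule.one_le.1 (one_le_wordSpan r P)))

theorem Mf_Yv_mul_Dy_mem_wordSpan (r P : ℕ) : Mf Yv * Dy ∈ wordSpan r P :=
  Wset_subset_wordSpan r P (by simp [Wset, W4])

theorem diagOp_mem_wordSpan_pow (r P : ℕ) {n : ℕ} {g : ℕ × ℕ → ℂ} (hg : g ∈ polyFun n) :
    diagOp g ∈ wordSpan r P ^ (n - 1) := by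
  suffices polyFun n ≤ (wordSpan r P ^ (n - 1)).comap diagOp.toLinearMap from this hg
  refine Submodule.span_le.2 ?_
  rintro _ ⟨s, t, hst, rfl⟩
  have factor : diagOp (fun z => (z.1 : ℂ) ^ s * (z.2 : ℂ) ^ t) =
      (Mf Xv * Dx) ^ s * (Mf Yv * Dy) ^ t := by
    rw [Mf_Xv_mul_Dx, Mf_Yv_mul_Dy, ← map_pow, ← map_pow, ← map_mul]
    rfl
  rw [SetLike.mem_coe, Submodule.mem_comap, AlgHom.toLinearMap_apply, factor]
  exact mul_mem_submodule_pow (one_le_wordSpan r P) (by omega)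
    (Submodule.pow_mem_pow _ (Mf_Xv_mul_Dx_mem_wordSpan r P) s)
    (Submodule.pow_mem_pow _ (Mf_Yv_mul_Dy_mem_wordSpan r P) t)

theorem Mf_Xv_pow_mul_Dy_pow_mem_wordSpan_pow {r A d : ℕ} (P : ℕ) (h : A ≤ r * d) :
    Mf (Xv ^ A) * Dy ^ d ∈ wordSpan r P ^ d := by
  induction d generalizing A with
  | zero =>
    obtain rfl : A = 0 := by simpa using h
    simp [Mf_one]
  | succ d ih =>
    have split : Mf (Xv ^ A) * Dy ^ (d + 1) =
        W5i (min A r) * (Mf (Xv ^ (A - min A r)) * Dy ^ d) := by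
      rw [W5i, mul_assoc, ← mul_assoc Dy, Dy_mul_Mf_Xv_pow, mul_assoc, ← mul_assoc, ← Mf_mul,
        ← pow_add, ← pow_succ', Nat.add_sub_cancel' (Nat.min_le_left A r)]
    rw [split]
    exact mul_mem_submodule_pow (one_le_wordSpan r P) (add_comm 1 d).le
      ((wordSpan r P).pow_one.symm ▸ W5i_mem_wordSpan P (Nat.min_le_right A r))
      (ih (by rw [mul_add] at h; omega))

theorem normalOp_mem_wordSpan_pow {r A B d k : ℕ} (P : ℕ) (hA : A ≤ r * d) {g : ℕ × ℕ → ℂ}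
    (hg : g ∈ polyFun (k + 1 - B - d)) : normalOp A 0 B d g ∈ wordSpan r P ^ k := by
  by_cases hk : B + d ≤ k
  · obtain ⟨g', hg', hgg'⟩ := exists_translate_mem_polyFun B d hg
    obtain rfl : (fun z => g' (z + (B, d))) = g := funext hgg'
    rw [normalOp_apply, diagOp_mul_Dy_pow_mul_Dx_pow, monoXY_zero_right, ← mul_assoc,
      ← mul_assoc]
    exact mul_mem_submodule_pow (one_le_wordSpan r P) (by omega)
      (mul_mem_submodule_pow (one_le_wordSpan r P) le_rfl
        (Mf_Xv_pow_mul_Dy_pow_mem_wordSpan_pow P hA)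
        (Submodule.pow_mem_pow _ (Dx_mem_wordSpan r P) B))
      (diagOp_mem_wordSpan_pow r P hg')
  · rw [show k + 1 - B - d = 0 by omega, polyFun_zero, Submodule.mem_bot] at hg
    rw [hg, map_zero]
    exact zero_mem _

theorem levelProd_translate (r : ℕ) (L : ℂ) (m a b : ℕ) :
    (fun z => levelProd r L m (z + (a, b))) = levelProd r (L - a - r * b) m := by
  ext z
  simp only [levelProd, Finset.prod_apply]
  refine Finset.prod_congr rfl fun t _ => ?_
  simp only [levelFun, Prod.fst_add, Prod.snd_add]
  push_cast
  ring

theorem W2_pow_eq (r P m : ℕ) : W2 r P ^ m = Mf (Xv ^ m) * diagOp (levelProd r P m) := by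
  induction m with
  | zero => simp [levelProd, Mf_one]
  | succ m ih =>
    have hcomm : diagOp (levelProd r P m) * Mf Xv = Mf Xv * diagOp (levelProd r (P - 1) m) := by
      simpa [levelProd_translate, monoXY] using diagOp_mul_Mf (levelProd r P m) 1 0
    rw [pow_succ, ih, W2_eq, mul_assoc, ← mul_assoc (diagOp _), hcomm, mul_assoc, ← map_mul,
      ← levelProd_succ', ← mul_assoc, ← Mf_mul, pow_succ]

theorem W2_pow_mul_normalOp (r P m A B d : ℕ) (h : ℕ × ℕ → ℂ) :
    W2 r P ^ m * normalOp A 0 B d h =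
      normalOp (m + A) 0 B d (levelProd r (P - A) m * h) := by
  rw [W2_pow_eq, mul_assoc, diagOp_mul_normalOp, levelProd_translate, ← monoXY_zero_right,
    Mf_mul_normalOp, Nat.cast_zero, mul_zero, sub_zero]

theorem raising_mem_wordSpan_pow {r d m k : ℕ} (P : ℕ) {h : ℕ × ℕ → ℂ}
    (hh : h ∈ polyFun (k + 1 - d - m)) :
    normalOp (m + r * d) 0 0 d (levelProd r (P - r * d) m * h) ∈ wordSpan r P ^ k := by
  by_cases hk : m ≤ k
  · rw [← Nat.cast_mul, ← W2_pow_mul_normalOp]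
    exact mul_mem_submodule_pow (one_le_wordSpan r P) (Nat.add_sub_cancel' hk).le
      (Submodule.pow_mem_pow _ (W2_mem_wordSpan r P) m)
      (normalOp_mem_wordSpan_pow P le_rfl (polyFun_mono (by omega) hh))
  · rw [show k + 1 - d - m = 0 by omega, polyFun_zero, Submodule.mem_bot] at hh
    rw [hh, mul_zero, map_zero]
    exact zero_mem _

end Words

section Reduction

/-- Whether a space of operators contains every bihomogeneous operator of order at most `k` and
nonpositive `y`-degree that the monomial exponents allow to map `𝒮^r_{P,q}` to `𝒮^r_{P+δ,q}` for
large `q`: those of bidegree `(a, -d)` with `a ≤ r d + δ` without restriction, and those raising the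
staircase level by `m + 1` more if their symbol vanishes on the top `m + 1` diagonals. -/
structure ContainsAdmissible (r P : ℕ) (δ : ℤ) (k : ℕ) (M : Submodule ℂ (Module.End ℂ R2)) :
    Prop where
  low : ∀ (a : ℤ) (d : ℕ), a ≤ r * d + δ → ∀ g ∈ symbolSpace k (a, -d), homogOp (a, -d) g ∈ M
  high : ∀ d m : ℕ, ∀ h ∈ polyFun (k + 1 - d - (m + 1)),
    homogOp (r * d + δ + (m + 1), -d) (levelProd r (P - r * d) (m + 1) * h) ∈ M

theorem homogOp_neg_right (a : ℤ) (d : ℕ) :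
    homogOp (a, -d) = normalOp a.toNat 0 (-a).toNat d := by
  simp [homogOp]

variable {r P p' q k : ℕ} {δ : ℤ} {M : Submodule ℂ (Module.End ℂ R2)} {T : Module.End ℂ R2}

theorem symbol_eq_zero_of_nonposY {K : Finset (ℤ × ℤ)} {g : ℤ × ℤ → ℕ × ℕ → ℂ}
    (hT : NonposY (∑ κ ∈ K, homogOp κ (g κ))) {κ : ℤ × ℤ} (hκ : κ ∈ K) (hpos : 0 < κ.2) :
    g κ = 0 := by
  ext ⟨i, j⟩
  refine symbol_apply_eq_zero hκ (coeffXY_eq_zero_of_mem_span (p := fun _ e => e ≤ _) (hT _ _) ?_)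
  omega

theorem symbol_apply_eq_zero_of_mapsTo_Smod {K : Finset (ℤ × ℤ)} {g : ℤ × ℤ → ℕ × ℕ → ℂ}
    (hT : ∀ w ∈ Smod r P q, (∑ κ ∈ K, homogOp κ (g κ)) w ∈ Smod r p' q)
    {κ : ℤ × ℤ} (hκ : κ ∈ K) {i j : ℕ}
    (hsource : i + (-κ.1).toNat + r * (j + (-κ.2).toNat) ≤ P) (hj : j + (-κ.2).toNat ≤ q)
    (htarget : p' < i + κ.1.toNat + r * (j + κ.2.toNat)) : g κ (i, j) = 0 := by
  refine symbol_apply_eq_zero hκ (coeffXY_eq_zero_of_mem_span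
    (Smod_eq_span r p' q ▸ hT _ (monoXY_mem_Smod hsource hj)) ?_)
  omega

theorem eqOn_Smod_of_monoXY {S T : Module.End ℂ R2}
    (h : ∀ i j, i + r * j ≤ P → j ≤ q → S (monoXY i j) = T (monoXY i j)) :
    ∀ w ∈ Smod r P q, S w = T w := by
  refine LinearMap.eqOn_span ?_
  rintro _ ⟨i, j, hi, hj, rfl⟩
  exact h i j hi hj

theorem ContainsAdmissible.exists_symbol_of_high (hM : ContainsAdmissible r P δ k M) {d m : ℕ}
    {a : ℤ} (ha : a = r * d + δ + (m + 1)) (ha0 : 0 ≤ a) {g : ℕ × ℕ → ℂ}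
    (hg : g ∈ symbolSpace k (a, -d))
    (hvan : ∀ i j, i + r * (j + d) ≤ P → j + d ≤ q → P < i + r * (j + d) + (m + 1) →
      g (i, j) = 0) :
    ∃ h ∈ symbolSpace k (a, -d), homogOp (a, -d) h ∈ M ∧
      ∀ w ∈ Smod r P q, homogOp (a, -d) g w = homogOp (a, -d) h w := by
  have symbolSpace_eq : symbolSpace k (a, -d) = polyFun (k + 1 - d) := by
    simp [symbolSpace, show (-a).toNat = 0 by omega]
  obtain ⟨h, hh, hgh⟩ : ∃ h ∈ polyFun (k + 1 - d - (m + 1)), ∀ i j, i + r * (j + d) ≤ P →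
      j + d ≤ q → g (i, j) = levelProd r (P - r * d) (m + 1) (i, j) * h (i, j) := by
    rw [symbolSpace_eq] at hg
    simp only [mul_add] at hvan ⊢
    by_cases hrd : r * d ≤ P
    · obtain ⟨h, hh, hgh⟩ := exists_eq_levelProd_mul_of_vanishing (r := r) (L := P - r * d)
        (m := m + 1) hg (Finset.range (q + 1 - d)) fun i j hj hle hlt => by
          rw [Finset.mem_range] at hj
          exact hvan i j (by omega) (by omega) (by omega)
      rw [Nat.cast_sub hrd, Nat.cast_mul] at hgh
      exact ⟨h, hh, fun i j hi hj => hgh i j (Finset.mem_range.2 (by omega)) (by omega)⟩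
    · exact ⟨0, zero_mem _, fun i j hi _ => by omega⟩
  refine ⟨_, symbolSpace_eq ▸ levelProd_mul_mem_polyFun r (P - r * d) hh, ha ▸ hM.high d m h hh,
    eqOn_Smod_of_monoXY fun i j hi hj => homogOp_monoXY_congr fun i' j' hi' hj' => ?_⟩
  obtain ⟨rfl, rfl⟩ : i = i' ∧ j = j' + d := by simp only at hi' hj'; omega
  exact hgh i j' hi hj

theorem ContainsAdmissible.exists_symbol (hM : ContainsAdmissible r P δ k M)
    (hp' : (p' : ℤ) = P + δ) (hδ : -1 ≤ δ) {K : Finset (ℤ × ℤ)} {g : ℤ × ℤ → ℕ × ℕ → ℂ}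
    (hg : ∀ κ, g κ ∈ symbolSpace k κ) (hY : NonposY (∑ κ ∈ K, homogOp κ (g κ)))
    (hT : ∀ w ∈ Smod r P q, (∑ κ ∈ K, homogOp κ (g κ)) w ∈ Smod r p' q) :
    ∀ κ ∈ K, ∃ h ∈ symbolSpace k κ, homogOp κ h ∈ M ∧
      ∀ w ∈ Smod r P q, homogOp κ (g κ) w = homogOp κ h w := by
  rintro ⟨a, b⟩ hκ
  rcases lt_or_ge 0 b with hb | hb
  · have hzero := symbol_eq_zero_of_nonposY hY hκ hb
    exact ⟨0, zero_mem _, by rw [map_zero]; exact zero_mem _, by simp [hzero]⟩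
  obtain ⟨d, rfl⟩ : ∃ d : ℕ, b = -d := ⟨(-b).toNat, by omega⟩
  rcases le_or_gt a (r * d + δ) with ha | ha
  · exact ⟨_, hg _, hM.low a d ha _ (hg _), fun _ _ => rfl⟩
  · have hrd : (0 : ℤ) ≤ r * d := by positivity
    obtain ⟨m, rfl⟩ : ∃ m : ℕ, a = r * d + δ + (m + 1) := ⟨(a - (r * d + δ) - 1).toNat, by omega⟩
    refine hM.exists_symbol_of_high rfl (by omega) (hg _) fun i j hi hj hlt => ?_
    have neg_toNat : (-(r * d + δ + (m + 1) : ℤ)).toNat = 0 := by omega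
    refine symbol_apply_eq_zero_of_mapsTo_Smod hT hκ ?_ (by simpa using hj) ?_
    · rw [neg_toNat]
      simpa using hi
    · rw [mul_add] at hlt
      simp only [Int.toNat_neg_natCast, add_zero]
      zify at hlt ⊢
      omega

theorem ContainsAdmissible.exists_mem_eqOn_Smod (hM : ContainsAdmissible r P δ k M)
    (hp' : (p' : ℤ) = P + δ) (hδ : -1 ≤ δ) (hT : IsDiffOpLE T k) (hY : NonposY T)
    (hpres : ∀ w ∈ Smod r P q, T w ∈ Smod r p' q) :
    ∃ A ∈ M, (∀ w ∈ Smod r P q, T w = A w) ∧ (Tmod k ≤ Smod r P q → T = A) := by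
  obtain ⟨K, g, hg, rfl⟩ := exists_eq_sum_homogOp hT
  choose! h hh hhM heq using hM.exists_symbol hp' hδ hg hY hpres
  refine ⟨∑ κ ∈ K, homogOp κ (h κ), sum_mem hhM, fun w hw => ?_, fun hk => ?_⟩
  · simp only [LinearMap.sum_apply]
    exact Finset.sum_congr rfl fun κ hκ => heq κ hκ w hw
  · refine Finset.sum_congr rfl fun κ hκ => ?_
    rw [symbol_eq_of_eqOn_Tmod (hg κ) (hh κ hκ) fun w hw => heq κ hκ w (hk hw)]

end Reduction

section AdmissibleBlocks

theorem commute_Dx_Dy : Commute Dx Dy :=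
  end_ext_monoXY fun i j => by
    simp only [Module.End.mul_apply, Dx_monoXY, Dy_monoXY, map_smul]
    rw [smul_comm]

theorem Dx_mul_normalOp (B d : ℕ) (g : ℕ × ℕ → ℂ) :
    Dx * normalOp 0 0 B d g = normalOp 0 0 (B + 1) d fun z => g (z + (1, 0)) := by
  have move : diagOp (fun z => g (z + (1, 0))) * Dx = Dx * diagOp g := by
    simpa using diagOp_mul_Dy_pow_mul_Dx_pow g 1 0
  rw [normalOp_apply, normalOp_apply, monoXY_zero_right, pow_zero, Mf_one, one_mul, one_mul,
    ← mul_assoc, ← move, mul_assoc, ← mul_assoc Dx, (commute_Dx_Dy.pow_right d).eq, mul_assoc,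
    pow_succ']

theorem Dy_mul_normalOp (A B d : ℕ) (g : ℕ × ℕ → ℂ) :
    Dy * normalOp A 0 B d g = normalOp A 0 B (d + 1) fun z => g (z + (0, 1)) := by
  have move : diagOp (fun z => g (z + (0, 1))) * Dy = Dy * diagOp g := by
    simpa using diagOp_mul_Dy_pow_mul_Dx_pow g 0 1
  rw [normalOp_apply, normalOp_apply, monoXY_zero_right, ← mul_assoc, Dy_mul_Mf_Xv_pow, mul_assoc,
    ← mul_assoc Dy, ← move, mul_assoc, ← mul_assoc Dy, pow_succ']

theorem diagOp_levelFun_mul_normalOp_levelProd (r d m : ℕ) (P : ℂ) (h : ℕ × ℕ → ℂ) :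
    diagOp (levelFun r P) * normalOp (m + r * d) 0 0 d (levelProd r (P - r * d) m * h) =
      normalOp (m + r * d) 0 0 d (levelProd r (P - r * d) (m + 1) * h) := by
  have translate : (fun z => levelFun r P (z + (m + r * d, 0))) = levelFun r (P - r * d - m) := by
    ext z
    simp only [levelFun, Prod.fst_add, Prod.snd_add]
    push_cast
    ring
  rw [diagOp_mul_normalOp, translate, levelProd_succ, ← mul_assoc, mul_comm (levelFun _ _)]

variable {r P k : ℕ} {M : Submodule ℂ (Module.End ℂ R2)}

theorem containsAdmissible_zero (h : wordSpan r P ^ k ≤ M) : ContainsAdmissible r P 0 k M where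
  low a d ha g hg := by
    rw [homogOp_neg_right]
    exact h (normalOp_mem_wordSpan_pow P (Int.toNat_le.2 (by simpa using ha))
      (by simpa [symbolSpace] using hg))
  high d m g hg := by
    have raise : (r * d + 0 + (m + 1) : ℤ) = (m + 1 + r * d : ℕ) := by
      push_cast
      ring
    rw [homogOp_neg_right, raise, Int.toNat_natCast, Int.toNat_neg_natCast]
    exact h (raising_mem_wordSpan_pow P hg)

theorem containsAdmissible_one (h : wordSpan r P ^ k ≤ M)
    (hx : ∀ A ∈ wordSpan r P ^ k, Mf Xv * A ∈ M) : ContainsAdmissible r P 1 k M where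
  low a d ha g hg := by
    rcases le_or_gt a (r * d) with hle | hlt
    · exact (containsAdmissible_zero h).low a d (by omega) g hg
    · obtain rfl : a = (1 + r * d : ℕ) := by push_cast; omega
      rw [homogOp_neg_right, Int.toNat_natCast, Int.toNat_neg_natCast, ← zero_add 0,
        ← Mf_mul_normalOp, monoXY_zero_right, pow_one]
      refine hx _ (normalOp_mem_wordSpan_pow P le_rfl ?_)
      simpa only [symbolSpace, neg_neg, Int.toNat_natCast, Int.toNat_neg_natCast] using hg
  high d m g hg := by
    have raise : (r * d + 1 + (m + 1) : ℤ) = (1 + (m + 1 + r * d) : ℕ) := by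
      push_cast
      ring
    rw [homogOp_neg_right, raise, Int.toNat_natCast, Int.toNat_neg_natCast, ← zero_add 0,
      ← Mf_mul_normalOp, monoXY_zero_right, pow_one]
    exact hx _ (raising_mem_wordSpan_pow P hg)

theorem normalOp_mem_of_Dx_mul_mem (hDx : ∀ A ∈ wordSpan r P ^ k, Dx * A ∈ M) {B d : ℕ}
    {g : ℕ × ℕ → ℂ} (hg : g ∈ polyFun (k + 1 - (B + 1) - d)) : normalOp 0 0 (B + 1) d g ∈ M := by
  obtain ⟨g', hg', hgg'⟩ := exists_translate_mem_polyFun 1 0 hg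
  obtain rfl : (fun z => g' (z + (1, 0))) = g := funext hgg'
  rw [← Dx_mul_normalOp]
  exact hDx _ (normalOp_mem_wordSpan_pow P (Nat.zero_le _) (polyFun_mono (by omega) hg'))

theorem normalOp_mem_of_Mf_mul_Dy_mul_mem
    (hDy : ∀ α, α + 1 ≤ r → ∀ A ∈ wordSpan r P ^ k, Mf (Xv ^ α) * Dy * A ∈ M) {a d : ℕ}
    (ha : a + 1 ≤ r * d + r) {g : ℕ × ℕ → ℂ} (hg : g ∈ polyFun (k + 1 - (d + 1))) :
    normalOp a 0 0 (d + 1) g ∈ M := by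
  obtain ⟨α, A, hα, hA, rfl⟩ : ∃ α A, α + 1 ≤ r ∧ A ≤ r * d ∧ α + A = a := by
    rcases r.eq_zero_or_pos with rfl | hr
    · simp at ha
    · exact ⟨min a (r - 1), a - min a (r - 1), by omega, by omega, by omega⟩
  obtain ⟨g', hg', hgg'⟩ := exists_translate_mem_polyFun 0 1 hg
  obtain rfl : (fun z => g' (z + (0, 1))) = g := funext hgg'
  have factor : normalOp (α + A) 0 0 (d + 1) (fun z => g' (z + (0, 1))) =
      Mf (Xv ^ α) * Dy * normalOp A 0 0 d g' := by
    rw [mul_assoc, Dy_mul_normalOp, ← monoXY_zero_right, Mf_mul_normalOp]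
  rw [factor]
  exact hDy α hα _ (normalOp_mem_wordSpan_pow P hA (polyFun_mono (by omega) hg'))

theorem containsAdmissible_neg_one (hDx : ∀ A ∈ wordSpan r P ^ k, Dx * A ∈ M)
    (hDy : ∀ α, α + 1 ≤ r → ∀ A ∈ wordSpan r P ^ k, Mf (Xv ^ α) * Dy * A ∈ M)
    (hlevel : ∀ A ∈ wordSpan r P ^ k, diagOp (levelFun r P) * A ∈ M) :
    ContainsAdmissible r P (-1) k M where
  low a d ha g hg := by
    rw [homogOp_neg_right]
    simp only [symbolSpace, neg_neg, Int.toNat_natCast] at hg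
    rcases lt_or_ge a 0 with hneg | hpos
    · obtain ⟨B, rfl⟩ : ∃ B : ℕ, a = -(B + 1 : ℕ) := ⟨(-a).toNat - 1, by omega⟩
      rw [neg_neg, Int.toNat_natCast] at hg ⊢
      exact normalOp_mem_of_Dx_mul_mem hDx hg
    · obtain ⟨a, rfl⟩ := Int.eq_ofNat_of_zero_le hpos
      rcases d with - | d
      · simp only [Nat.cast_zero, mul_zero] at ha
        omega
      · rw [Int.toNat_natCast, Int.toNat_neg_natCast] at *
        refine normalOp_mem_of_Mf_mul_Dy_mul_mem hDy ?_ hg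
        rw [← Nat.mul_succ]
        zify
        push_cast at ha
        omega
  high d m g hg := by
    have raise : (r * d + -1 + (m + 1) : ℤ) = (m + r * d : ℕ) := by
      push_cast
      ring
    rw [homogOp_neg_right, raise, Int.toNat_natCast, Int.toNat_neg_natCast,
      ← diagOp_levelFun_mul_normalOp_levelProd]
    exact hlevel _ (raising_mem_wordSpan_pow P (polyFun_mono (by omega) hg))

end AdmissibleBlocks

section MatrixOperators

open scoped Pointwise

/-- Matrices with entries in the endomorphisms of `R`, acting on `V = R × R`. -/
def matOpHom : Matrix (Fin 2) (Fin 2) (Module.End ℂ R2) →ₐ[ℂ] Module.End ℂ V2 :=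
  AlgHom.ofLinearMap
    { toFun := fun N => matOp (N 0 0) (N 0 1) (N 1 0) (N 1 1)
      map_add' := fun N N' => LinearMap.ext fun w => by
        simp [matOp, add_add_add_comm]
      map_smul' := fun c N => LinearMap.ext fun w => by
        simp [matOp] }
    (LinearMap.ext fun w => by simp [matOp])
    (fun N N' => LinearMap.ext fun w => by
      simp [matOp, Matrix.mul_apply, add_add_add_comm])

theorem matOpHom_apply (N : Matrix (Fin 2) (Fin 2) (Module.End ℂ R2)) :
    matOpHom N = matOp (N 0 0) (N 0 1) (N 1 0) (N 1 1) :=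
  rfl

theorem matOpHom_diagonal (D : Fin 2 → Module.End ℂ R2) :
    matOpHom (Matrix.diagonal D) = dg (D 0) (D 1) := by
  simp [matOpHom_apply, dg]

/-- The span of the identity and of the generators in `G`; its `n`-th power is the span of the
compositions of at most `n` generators. -/
def genSpan (r p : ℕ) : Submodule ℂ (Module.End ℂ V2) :=
  Submodule.span ℂ ({1} ∪ Gstair r p)

theorem one_le_genSpan (r p : ℕ) : 1 ≤ genSpan r p :=
  Submodule.one_le.2 (Submodule.subset_span (Or.inl rfl))

theorem Gstair_subset_genSpan (r p : ℕ) : Gstair r p ⊆ genSpan r p :=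
  Set.subset_union_right.trans Submodule.subset_span

theorem pow_subset_matProdsLE (S : Set (Module.End ℂ V2)) (n : ℕ) :
    ({1} ∪ S) ^ n ⊆ matProdsLE n S := by
  induction n with
  | zero =>
    rintro _ rfl
    exact ⟨[], le_rfl, by simp, rfl⟩
  | succ n ih =>
    rw [pow_succ']
    rintro _ ⟨x, hx, y, hy, rfl⟩
    obtain ⟨l, hlen, hmem, rfl⟩ := ih hy
    rcases hx with rfl | hx
    · exact ⟨l, by omega, hmem, (one_mul _).symm⟩
    · exact ⟨x :: l, by simpa using hlen, by simpa [hx] using hmem, by simp⟩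

theorem genSpan_pow_le (r p n : ℕ) :
    genSpan r p ^ n ≤ Submodule.span ℂ (matProdsLE n (Gstair r p)) := by
  rw [genSpan, Submodule.span_pow]
  exact Submodule.span_mono (pow_subset_matProdsLE _ n)

/-- The number `p_b` of the paper: component `b` of `V` carries the module `𝒮^r_{p_b,q}`. -/
def compLevel (p : ℕ) : Fin 2 → ℕ := ![p - 1, p]

/-- The tuples of endomorphisms which, acting diagonally, lie in `genSpan`. -/
def diagSpan (r p : ℕ) : Submodule ℂ (Fin 2 → Module.End ℂ R2) :=
  (genSpan r p).comap (matOpHom.comp (Matrix.diagonalAlgHom ℂ)).toLinearMap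

theorem mem_diagSpan {r p : ℕ} {D : Fin 2 → Module.End ℂ R2} :
    D ∈ diagSpan r p ↔ dg (D 0) (D 1) ∈ genSpan r p := by
  rw [← matOpHom_diagonal]
  rfl

theorem wordSpan_le_map_diagSpan (r p : ℕ) (j : Fin 2) :
    wordSpan r (compLevel p j) ≤
      (diagSpan r p).map (Pi.evalAlgHom ℂ (fun _ => Module.End ℂ R2) j).toLinearMap := by
  have gen {D : Fin 2 → Module.End ℂ R2} (hD : dg (D 0) (D 1) ∈ Gstair r p) :
      D j ∈ (diagSpan r p).map (Pi.evalAlgHom ℂ (fun _ => Module.End ℂ R2) j).toLinearMap :=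
    ⟨D, mem_diagSpan.2 (Gstair_subset_genSpan r p hD), rfl⟩
  refine Submodule.span_le.2 ?_
  rintro _ (rfl | (rfl | rfl | rfl | rfl) | ⟨i, hi, rfl⟩)
  · refine ⟨1, Submodule.mem_comap.2 ?_, rfl⟩
    rw [AlgHom.toLinearMap_apply, map_one]
    exact Submodule.one_le.1 (one_le_genSpan r p)
  · exact gen (D := fun _ => W1) (Or.inl (Or.inl (Or.inl rfl)))
  · exact gen (D := fun j => W2 r (compLevel p j)) (Or.inl (Or.inl (by simp [Tg2, compLevel])))
  · exact gen (D := fun j => W3 (compLevel p j)) (Or.inl (Or.inl (by simp [Tg3, compLevel])))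
  · exact gen (D := fun _ => W4) (Or.inl (Or.inl (by simp [Tg4])))
  · exact gen (D := fun _ => W5i i) (Or.inl (Or.inr ⟨i, hi, rfl⟩))

theorem exists_dg_mem_genSpan_pow {r p n : ℕ} {j : Fin 2} {A : Module.End ℂ R2}
    (hA : A ∈ wordSpan r (compLevel p j) ^ n) :
    ∃ D : Fin 2 → Module.End ℂ R2, D j = A ∧ matOpHom (Matrix.diagonal D) ∈ genSpan r p ^ n := by
  have hpow := pow_le_pow_left' (wordSpan_le_map_diagSpan r p j) n hA
  rw [← Submodule.map_pow] at hpow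
  obtain ⟨D, hD, rfl⟩ := hpow
  refine ⟨D, rfl, ?_⟩
  have hmap :=
    Submodule.mem_map_of_mem (f := (matOpHom.comp (Matrix.diagonalAlgHom ℂ)).toLinearMap) hD
  rw [Submodule.map_pow] at hmap
  exact pow_le_pow_left' (Submodule.map_comap_le _ _) n hmap

/-- The operators whose placement in position `(i, j)` of an otherwise zero matrix lies in the
`n`-th power of `genSpan`. -/
def entrySpan (r p n : ℕ) (i j : Fin 2) : Submodule ℂ (Module.End ℂ R2) :=
  (genSpan r p ^ n).comap (matOpHom.toLinearMap ∘ₗ Matrix.singleLinearMap ℂ i j)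

theorem mem_entrySpan {r p n : ℕ} {i j : Fin 2} {A : Module.End ℂ R2} :
    A ∈ entrySpan r p n i j ↔ matOpHom (Matrix.single i j A) ∈ genSpan r p ^ n :=
  Iff.rfl

theorem mul_mem_entrySpan {r p k : ℕ} {i j : Fin 2} {Q : Module.End ℂ R2}
    (hQ : matOpHom (Matrix.single i j Q) ∈ genSpan r p) :
    ∀ A ∈ wordSpan r (compLevel p j) ^ k, Q * A ∈ entrySpan r p (k + 1) i j := by
  intro A hA
  obtain ⟨D, rfl, hD⟩ := exists_dg_mem_genSpan_pow hA
  have hmul : Matrix.single i j (Q * D j) = Matrix.single i j Q * Matrix.diagonal D := by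
    ext a b : 2
    rw [Matrix.mul_diagonal]
    by_cases hb : j = b
    · subst hb
      by_cases ha : i = a <;> simp [ha]
    · simp [hb]
  rw [mem_entrySpan, hmul, map_mul]
  exact mul_mem_submodule_pow (one_le_genSpan r p) (add_comm 1 k).le
    ((genSpan r p).pow_one.symm ▸ hQ) hD

theorem matOpHom_single_zero_zero (A : Module.End ℂ R2) :
    matOpHom (Matrix.single 0 0 A) = dg A 0 := by
  simp [matOpHom_apply, dg]

theorem matOpHom_single_zero_one (A : Module.End ℂ R2) :
    matOpHom (Matrix.single 0 1 A) = matOp 0 A 0 0 := by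
  simp [matOpHom_apply]

theorem matOpHom_single_one_zero (A : Module.End ℂ R2) :
    matOpHom (Matrix.single 1 0 A) = matOp 0 0 A 0 := by
  simp [matOpHom_apply]

theorem dg_one_zero_mem_genSpan (r p : ℕ) : dg 1 0 ∈ genSpan r p := by
  have eq_J : (dg 1 0 : Module.End ℂ V2) = (2 : ℂ) • Jgen p - (p : ℂ) • 1 :=
    LinearMap.ext fun w => by
      ext1 <;> simp [Jgen, dg, matOp, smul_smul, mul_div_cancel₀, add_smul]
  rw [eq_J]
  exact sub_mem
    (Submodule.smul_mem _ _ (Gstair_subset_genSpan r p (Or.inl (Or.inl (by simp)))))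
    (Submodule.smul_mem _ _ (Submodule.one_le.1 (one_le_genSpan r p)))

theorem matOpHom_single_self_one_mem_genSpan (r p : ℕ) (j : Fin 2) :
    matOpHom (Matrix.single j j 1) ∈ genSpan r p := by
  have h := dg_one_zero_mem_genSpan r p
  rw [← matOpHom_single_zero_zero] at h
  revert j
  refine Fin.forall_fin_two.2 ⟨h, ?_⟩
  have compl : matOpHom (Matrix.single 1 1 1) = 1 - matOpHom (Matrix.single 0 0 1) := by
    rw [← map_one matOpHom, ← map_sub]
    congr 1
    ext a b : 2
    fin_cases a <;> fin_cases b <;> simp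
  rw [compl]
  exact sub_mem (Submodule.one_le.1 (one_le_genSpan r p)) h

theorem wordSpan_pow_le_entrySpan (r p k : ℕ) (j : Fin 2) :
    wordSpan r (compLevel p j) ^ k ≤ entrySpan r p (k + 1) j j := fun A hA => by
  simpa only [one_mul] using
    mul_mem_entrySpan (matOpHom_single_self_one_mem_genSpan r p j) A hA

theorem containsAdmissible_entrySpan {p : ℕ} (hp : 1 ≤ p) (r k : ℕ) (i j : Fin 2) :
    ContainsAdmissible r (compLevel p j) (compLevel p i - compLevel p j) k
      (entrySpan r p (k + 1) i j) := by
  have gen {Q : Module.End ℂ R2} {i j : Fin 2} (hQ : matOpHom (Matrix.single i j Q) ∈ Gstair r p) :=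
    mul_mem_entrySpan (k := k) (Gstair_subset_genSpan r p hQ)
  have hdiff : ((p - 1 : ℕ) : ℤ) = p - 1 := by omega
  revert i j
  simp only [Fin.forall_fin_two, sub_self]
  refine ⟨⟨?_, ?_⟩, ?_, ?_⟩
  · exact containsAdmissible_zero (wordSpan_pow_le_entrySpan r p k 0)
  · rw [show (compLevel p 0 - compLevel p 1 : ℤ) = -1 by simp [compLevel, hdiff]]
    refine containsAdmissible_neg_one (gen ?_) (fun α hα => gen ?_) (gen ?_)
    · simp [matOpHom_single_zero_one, Gstair, Qp1]
    · exact Or.inr ⟨α, hα, matOpHom_single_zero_one _⟩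
    · rw [← euler_sub_eq_diagOp]
      exact Or.inl (Or.inl (by simp [matOpHom_single_zero_one, Qp0, compLevel]))
  · rw [show (compLevel p 1 - compLevel p 0 : ℤ) = 1 by simp [compLevel, hdiff]]
    refine containsAdmissible_one (fun A hA => ?_) (gen ?_)
    · rw [← one_mul A]
      exact gen (by simp [matOpHom_single_one_zero, Gstair, Qm0]) A hA
    · simp [matOpHom_single_one_zero, Gstair, Qm1]
  · exact containsAdmissible_zero (wordSpan_pow_le_entrySpan r p k 1)

theorem matOpHom_mem_genSpan_pow {r p n : ℕ} {N : Matrix (Fin 2) (Fin 2) (Module.End ℂ R2)}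
    (h : ∀ i j, N i j ∈ entrySpan r p n i j) : matOpHom N ∈ genSpan r p ^ n := by
  rw [N.matrix_eq_sum_single, map_sum]
  refine sum_mem fun i _ => ?_
  rw [map_sum]
  exact sum_mem fun j _ => h i j

theorem mapsTo_Smod_of_matOp_mapsTo {r p q : ℕ} {N : Matrix (Fin 2) (Fin 2) (Module.End ℂ R2)}
    (h : ∀ w ∈ (Smod r (p - 1) q).prod (Smod r p q),
      matOpHom N w ∈ (Smod r (p - 1) q).prod (Smod r p q)) (i j : Fin 2) :
    ∀ w ∈ Smod r (compLevel p j) q, N i j w ∈ Smod r (compLevel p i) q := by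
  have left {u : R2} (hu : u ∈ Smod r (p - 1) q) : N 0 0 u ∈ Smod r (p - 1) q ∧
      N 1 0 u ∈ Smod r p q := by
    simpa [matOpHom_apply, matOp] using h (u, 0) ⟨hu, zero_mem _⟩
  have right {v : R2} (hv : v ∈ Smod r p q) : N 0 1 v ∈ Smod r (p - 1) q ∧
      N 1 1 v ∈ Smod r p q := by
    simpa [matOpHom_apply, matOp] using h (0, v) ⟨zero_mem _, hv⟩
  revert i j
  simp only [Fin.forall_fin_two]
  exact ⟨⟨fun _ hu => (left hu).1, fun _ hv => (right hv).1⟩,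
    fun _ hu => (left hu).2, fun _ hv => (right hv).2⟩

end MatrixOperators

theorem isDiffOpLE_diffOp {F : Finset (ℕ × ℕ)} {f : ℕ × ℕ → R2} {k : ℕ}
    (hf : ∀ ij : ℕ × ℕ, k < ij.1 + ij.2 → f ij = 0) : IsDiffOpLE (diffOp F f) k := by
  refine ⟨fun ij => if ij ∈ F then f ij else 0, ?_⟩
  have term_eq (ij : ℕ × ℕ) : Mf (if ij ∈ F then f ij else 0) * Dx ^ ij.1 * Dy ^ ij.2 =
      if ij ∈ F then Mf (f ij) * Dx ^ ij.1 * Dy ^ ij.2 else 0 := by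
    split_ifs
    · rfl
    · simp [Mf]
  simp only [diffOp, term_eq]
  rw [Finset.sum_ite_mem, Finset.inter_comm]
  refine (Finset.sum_subset Finset.inter_subset_left fun ij hF hij => ?_).symm
  have horder : k < ij.1 + ij.2 := by
    by_contra hle
    refine hij (Finset.mem_inter.2 ⟨hF, ?_⟩)
    simp only [ordIdx, Finset.mem_filter, Finset.mem_product, Finset.mem_range]
    omega
  simp [hf ij horder, Mf]

theorem stmt18_general (r p q k : ℕ) (hp : 1 ≤ p)
    (N : Matrix (Fin 2) (Fin 2) (Module.End ℂ R2)) (hN : ∀ i j, IsDiffOpLE (N i j) k)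
    (hY : ∀ i j, NonposY (N i j))
    (hpres : ∀ w ∈ (Smod r (p - 1) q).prod (Smod r p q),
      matOpHom N w ∈ (Smod r (p - 1) q).prod (Smod r p q)) :
    ∃ P ∈ Submodule.span ℂ (matProdsLE (k + 1) (Gstair r p)),
      (∀ w ∈ (Smod r (p - 1) q).prod (Smod r p q), matOpHom N w = P w) ∧
        (Tmod k ≤ Smod r (p - 1) q → matOpHom N = P) := by
  choose A hA heqOn heq using fun i j =>
    (containsAdmissible_entrySpan hp r k i j).exists_mem_eqOn_Smod (by omega)
      (by fin_cases i <;> fin_cases j <;> simp [compLevel] <;> omega) (hN i j) (hY i j)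
      (mapsTo_Smod_of_matOp_mapsTo hpres i j)
  refine ⟨matOpHom (Matrix.of A), genSpan_pow_le r p (k + 1) (matOpHom_mem_genSpan_pow hA), ?_, ?_⟩
  · rintro ⟨u, v⟩ ⟨hu, hv⟩
    ext1
    · exact congrArg₂ (· + ·) (heqOn 0 0 u hu) (heqOn 0 1 v hv)
    · exact congrArg₂ (· + ·) (heqOn 1 0 u hu) (heqOn 1 1 v hv)
  · refine fun hk => congrArg matOpHom (Matrix.ext fun i j => heq i j ?_)
    exact hk.trans (Smod_mono (by fin_cases j <;> simp [compLevel]))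

theorem stmt18 (r p q k : ℕ) (hr : 2 ≤ r) (hp : 1 ≤ p) (hq : r * q ≤ p - 1)
    (f11 f12 f21 f22 : ℕ × ℕ → R2)
    (h11 : ∀ ij : ℕ × ℕ, k < ij.1 + ij.2 → f11 ij = 0)
    (h12 : ∀ ij : ℕ × ℕ, k < ij.1 + ij.2 → f12 ij = 0)
    (h21 : ∀ ij : ℕ × ℕ, k < ij.1 + ij.2 → f21 ij = 0)
    (h22 : ∀ ij : ℕ × ℕ, k < ij.1 + ij.2 → f22 ij = 0)
    (hy11 : NonposY (diffOp (sIdx r (p - 1) q) f11))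
    (hy12 : NonposY (diffOp (sIdx r p q) f12))
    (hy21 : NonposY (diffOp (sIdx r (p - 1) q) f21))
    (hy22 : NonposY (diffOp (sIdx r p q) f22))
    (T : Module.End ℂ V2)
    (hT : T = matOp (diffOp (sIdx r (p - 1) q) f11) (diffOp (sIdx r p q) f12)
                    (diffOp (sIdx r (p - 1) q) f21) (diffOp (sIdx r p q) f22))
    (hpres : ∀ w ∈ (Smod r (p - 1) q).prod (Smod r p q),
      T w ∈ (Smod r (p - 1) q).prod (Smod r p q)) :
    ∃ P ∈ Submodule.span ℂ (matProdsLE (k + 1) (Gstair r p)),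
      (∀ w ∈ (Smod r (p - 1) q).prod (Smod r p q), T w = P w) ∧ (k ≤ q → T = P) := by
  subst hT
  obtain ⟨P, hP, heqOn, heq⟩ := stmt18_general r p q k hp
    !![diffOp (sIdx r (p - 1) q) f11, diffOp (sIdx r p q) f12;
      diffOp (sIdx r (p - 1) q) f21, diffOp (sIdx r p q) f22]
    (Fin.forall_fin_two.2 ⟨Fin.forall_fin_two.2 ⟨isDiffOpLE_diffOp h11, isDiffOpLE_diffOp h12⟩,
      Fin.forall_fin_two.2 ⟨isDiffOpLE_diffOp h21, isDiffOpLE_diffOp h22⟩⟩)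
    (Fin.forall_fin_two.2 ⟨Fin.forall_fin_two.2 ⟨hy11, hy12⟩, Fin.forall_fin_two.2 ⟨hy21, hy22⟩⟩)
    hpres
  exact ⟨P, hP, heqOn, fun hk => heq (Tmod_le_Smod (by omega) hk hq)⟩
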